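/- A set of ordered unranked Σ-trees is regular (i.e., equal to L(A) for some nondeterministic unranked tree automaton A) if and only if it is definable by an MSO sentence. -/

import Mathlib

/-!
Both directions go through finite-state evaluation along the first-child / next-sibling structure
of an unranked tree.

From MSO to automata.  A valuation of the variables is a decoration of the nodes of the tree, and a
property of decorated trees is `Recog`nizable if a finite deterministic bottom-up automaton decides
it, where the automaton computes its state at `u·i` from the letter at `u·i`, the state of the
forest of the children of `u·i`, and the state of the forest of the right siblings of `u·i`
(`UTree.val`).  The atomic formulas are recognizable by explicit automata, complement and product
give the connectives, and the subset construction gives the quantifiers (`Recog.proj`), a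
first-order variable being a set variable that marks exactly one node (`Recog.unique`).  Hence
every formula is recognizable (`MSO.exists_recog`).  A recognizable property becomes the language
of a NUTA that guesses at each node its label and the state of the forest of its children; the
guess is right iff folding the transition function over the word of the children yields the guessed
state, and this is a regular condition by Kleene's theorem (`exists_regex_foldr`,
`regular_of_recog`).

From automata to MSO.  A regular expression has finitely many left quotients
(`finite_leftQuotients`).  So a tree is accepted iff its nodes can be coloured by pairs `(q, r)`, of
a state and a left quotient of some horizontal language, subject to constraints on the root, the
leaves, the pairs (node, first child), the pairs of consecutive siblings, and the last siblings
(`NUTA.accepts_iff_colouring`): here `r` is the language to which the word of the states of the node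
and its right siblings must belong.  The existence of such a colouring is expressed by guessing one
set per colour (`MSO.exists_colouring`).
-/

namespace UnrankedTrees

/-! ### Unranked trees: tree domains and ordered unranked Σ-trees.
Nodes are finite strings over ℕ; a tree domain is a finite prefix-closed set
of nodes such that `s ++ [i] ∈ D` implies `s ++ [j] ∈ D` for all `j < i`. -/

abbrev Node : Type := List ℕ

/-- An ordered unranked tree over alphabet `A`: a tree domain with a labeling. -/
structure UTree (A : Type) where
  dom : Finset Node
  nil_mem : ([] : Node) ∈ dom
  prefix_closed : ∀ ⦃s t : Node⦄, s ∈ dom → t <+: s → t ∈ dom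
  sib_closed : ∀ ⦃s : Node⦄ ⦃i j : ℕ⦄, s ++ [i] ∈ dom → j < i → s ++ [j] ∈ dom
  label : Node → A

namespace UTree

variable {A : Type}

/-- The child relation `≺_ch`. -/
def childR (T : UTree A) (s t : Node) : Prop :=
  s ∈ T.dom ∧ t ∈ T.dom ∧ ∃ i : ℕ, t = s ++ [i]

/-- The descendant-or-self relation `≺*_ch` (the prefix relation). -/
def descR (T : UTree A) (s t : Node) : Prop :=
  s ∈ T.dom ∧ t ∈ T.dom ∧ s <+: t

/-- The next-sibling relation `≺_ns`. -/
def nsR (T : UTree A) (s t : Node) : Prop :=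
  s ∈ T.dom ∧ t ∈ T.dom ∧ ∃ (u : Node) (i : ℕ), s = u ++ [i] ∧ t = u ++ [i + 1]

/-- The sibling ordering `≺*_ns` (reflexive-transitive closure of next-sibling). -/
def sibR (T : UTree A) (s t : Node) : Prop :=
  s ∈ T.dom ∧ t ∈ T.dom ∧ ∃ (u : Node) (i j : ℕ), s = u ++ [i] ∧ t = u ++ [j] ∧ i ≤ j

/-- The first-child relation `≺_fc`. -/
def firstChildR (T : UTree A) (s t : Node) : Prop :=
  s ∈ T.dom ∧ t ∈ T.dom ∧ t = s ++ [0]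

/-- The number of children of a node. -/
noncomputable def childCount (T : UTree A) (s : Node) : ℕ :=
  Set.ncard {i : ℕ | s ++ [i] ∈ T.dom}

/-- The list of children of a node `s`, in sibling order: `s·0, …, s·(n-1)`. -/
noncomputable def childrenList (T : UTree A) (s : Node) : List Node :=
  (List.range (T.childCount s)).map fun i => s ++ [i]

/-- `s` is a leaf of `T`. -/
def isLeaf (T : UTree A) (s : Node) : Prop :=
  s ∈ T.dom ∧ ∀ i : ℕ, s ++ [i] ∉ T.dom

/-- `s` has no next sibling in `T` (the root also counts as "last"). -/
def isLast (T : UTree A) (s : Node) : Prop :=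
  s = [] ∨ ∃ (u : Node) (i : ℕ), s = u ++ [i] ∧ u ++ [i + 1] ∉ T.dom

end UTree

/-! ### MSO over ordered unranked trees.
First-order variables and monadic second-order variables are indexed by ℕ.
First-order quantifiers range over the nodes of the tree, set quantifiers over
sets of nodes of the tree. -/

inductive MSO (A : Type) : Type where
  | eq : ℕ → ℕ → MSO A
  | desc : ℕ → ℕ → MSO A               -- x ≺*_ch y
  | sib : ℕ → ℕ → MSO A                -- x ≺*_ns y
  | lab : A → ℕ → MSO A                -- P_a(x)
  | mem : ℕ → ℕ → MSO A                -- X(x)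
  | not : MSO A → MSO A
  | and : MSO A → MSO A → MSO A
  | exFO : ℕ → MSO A → MSO A
  | exSO : ℕ → MSO A → MSO A

namespace MSO

variable {A : Type}

def Sat (T : UTree A) (v : ℕ → Node) (V : ℕ → Set Node) : MSO A → Prop
  | .eq x y => v x = v y
  | .desc x y => T.descR (v x) (v y)
  | .sib x y => T.sibR (v x) (v y)
  | .lab a x => v x ∈ T.dom ∧ T.label (v x) = a
  | .mem X x => v x ∈ V X
  | .not φ => ¬ Sat T v V φ
  | .and φ ψ => Sat T v V φ ∧ Sat T v V ψ
  | .exFO n φ => ∃ s ∈ T.dom, Sat T (Function.update v n s) V φ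
  | .exSO n φ => ∃ S : Set Node, S ⊆ ↑T.dom ∧ Sat T v (Function.update V n S) φ

/-- `φ`, as a sentence, defines the set `L` of trees.  (Quantifying over all
valuations forces the truth value to be independent of the valuation, i.e.
`φ` behaves as a sentence.) -/
def DefinesB (φ : MSO A) (L : Set (UTree A)) : Prop :=
  ∀ (T : UTree A) (v : ℕ → Node) (V : ℕ → Set Node), T ∈ L ↔ Sat T v V φ

/-- `φ`, as a formula whose only free variable is the first-order variable `0`,
defines the unary query `Q`. -/
def DefinesU (φ : MSO A) (Q : UTree A → Set Node) : Prop :=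
  ∀ (T : UTree A) (v : ℕ → Node) (V : ℕ → Set Node) (s : Node), s ∈ T.dom →
    (s ∈ Q T ↔ Sat T (Function.update v 0 s) V φ)

end MSO

/-! ### Nondeterministic unranked tree automata (NUTA). -/

/-- A nondeterministic unranked tree automaton: finitely many states, final
states `F`, and `δ(q,a)` a regular language over the states, given by a
regular expression. -/
structure NUTA (A : Type) where
  Q : Type
  fintype_Q : Fintype Q
  F : Set Q
  δ : Q → A → RegularExpression Q

namespace NUTA

variable {A : Type}

/-- `ρ` is a run of `N` on `T`: at every node `s` labelled `a` with children
`s·0, …, s·(n-1)`, the string `ρ(s·0) ⋯ ρ(s·(n-1))` lies in `δ(ρ(s), a)`. -/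
def IsRun (N : NUTA A) (T : UTree A) (ρ : Node → N.Q) : Prop :=
  ∀ s ∈ T.dom, ((T.childrenList s).map ρ) ∈ (N.δ (ρ s) (T.label s)).matches'

/-- A tree is accepted if some run puts the root in a final state. -/
def Accepts (N : NUTA A) (T : UTree A) : Prop :=
  ∃ ρ : Node → N.Q, N.IsRun T ρ ∧ ρ [] ∈ N.F

end NUTA

/-- A set of unranked trees is regular if it is the language of some NUTA. -/
def RegularLang {A : Type} (L : Set (UTree A)) : Prop :=
  ∃ N : NUTA A, ∀ T : UTree A, N.Accepts T ↔ T ∈ L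

/-! ### Regular expressions: finitely many left quotients, and Kleene's construction -/

/-- A language given by a regular expression has only finitely many left quotients. -/
theorem finite_leftQuotients {Q : Type} (r : RegularExpression Q) :
    (Set.range r.matches'.leftQuotient).Finite := by
  induction r with
  | zero =>
    refine (Set.finite_singleton (0 : Language Q)).subset ?_
    rintro _ ⟨x, rfl⟩
    exact Language.ext fun y => Iff.rfl
  | epsilon =>
    refine (Set.toFinite ({1, 0} : Set (Language Q))).subset ?_
    rintro _ ⟨x, rfl⟩
    rcases x with _ | ⟨a, x⟩
    · left; rfl
    · right
      refine Language.ext fun y => ?_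
      simp [Language.mem_leftQuotient, Language.mem_one]
  | char a =>
    refine (Set.toFinite ({{[a]}, 1, 0} : Set (Language Q))).subset ?_
    rintro _ ⟨x, rfl⟩
    have key : ∀ z : List Q, z ∈ (RegularExpression.char a).matches' ↔ z = [a] := fun z => Iff.rfl
    rcases x with _ | ⟨b, x⟩
    · left; rfl
    · by_cases h : b = a ∧ x = []
      · right; left
        obtain ⟨rfl, rfl⟩ := h
        refine Language.ext fun y => ?_
        rw [Language.mem_leftQuotient, key]
        simp [Language.mem_one]
      · right; right
        refine Language.ext fun y => ?_
        rw [Language.mem_leftQuotient, key]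
        simp only [List.cons_append, List.cons.injEq, List.append_eq_nil_iff,
          Language.notMem_zero, iff_false]
        tauto
  | plus r s hr hs =>
    refine ((hr.prod hs).image fun p => p.1 + p.2).subset ?_
    rintro _ ⟨x, rfl⟩
    exact ⟨(_, _), ⟨⟨x, rfl⟩, ⟨x, rfl⟩⟩, Language.ext fun y => Iff.rfl⟩
  | comp r s hr hs =>
    set L := r.matches'
    set M := s.matches'
    -- `x⁻¹(LM) = (x⁻¹L)M ∪ ⋃ {v⁻¹M | x = uv, u ∈ L}`
    refine ((hr.prod hs.finite_subsets).image fun p : Language Q × Set (Language Q) =>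
      ({y | y ∈ p.1 * M ∨ ∃ N ∈ p.2, y ∈ N} : Language Q)).subset ?_
    rintro _ ⟨x, rfl⟩
    refine ⟨(L.leftQuotient x, {N | ∃ u v, x = u ++ v ∧ u ∈ L ∧ N = M.leftQuotient v}),
      ⟨⟨x, rfl⟩, ?_⟩, Language.ext fun y => ?_⟩
    · rintro _ ⟨u, v, -, -, rfl⟩
      exact ⟨v, rfl⟩
    · change (y ∈ L.leftQuotient x * M ∨ ∃ N ∈ {N | ∃ u v, x = u ++ v ∧ u ∈ L ∧
        N = M.leftQuotient v}, y ∈ N) ↔ x ++ y ∈ L * M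
      constructor
      · rintro (h | ⟨_, ⟨u, v, rfl, hu, rfl⟩, hy⟩)
        · obtain ⟨a, ha, b, hb, rfl⟩ := Language.mem_mul.1 h
          exact Language.mem_mul.2 ⟨x ++ a, ha, b, hb, by simp⟩
        · exact Language.mem_mul.2 ⟨u, hu, v ++ y, hy, by simp⟩
      · intro h
        obtain ⟨a, ha, b, hb, hab⟩ := Language.mem_mul.1 h
        rcases List.append_eq_append_iff.1 hab with ⟨c, rfl, rfl⟩ | ⟨c, rfl, rfl⟩
        · exact Or.inr ⟨_, ⟨a, c, rfl, ha, rfl⟩, hb⟩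
        · exact Or.inl (Language.mem_mul.2 ⟨c, ha, b, hb, rfl⟩)
  | star r hr =>
    set L := r.matches'
    -- `x⁻¹L∗ = ⋃ {(v⁻¹L)L∗ | x = uv, u ∈ L∗}`, together with `ε` when `x = ε`
    refine (((Set.toFinite (Set.univ : Set Prop)).prod hr.finite_subsets).image
      fun p : Prop × Set (Language Q) =>
        ({y | (p.1 ∧ y = []) ∨ ∃ N ∈ p.2, y ∈ N * KStar.kstar L} : Language Q)).subset ?_
    rintro _ ⟨x, rfl⟩
    refine ⟨(x = [], {N | ∃ u v, x = u ++ v ∧ u ∈ KStar.kstar L ∧ N = L.leftQuotient v}),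
      ⟨trivial, ?_⟩, Language.ext fun y => ?_⟩
    · rintro _ ⟨u, v, -, -, rfl⟩
      exact ⟨v, rfl⟩
    · change ((x = [] ∧ y = []) ∨ ∃ N ∈ {N | ∃ u v, x = u ++ v ∧ u ∈ KStar.kstar L ∧
        N = L.leftQuotient v}, y ∈ N * KStar.kstar L) ↔ x ++ y ∈ KStar.kstar L
      constructor
      · rintro (⟨rfl, rfl⟩ | ⟨_, ⟨u, v, rfl, hu, rfl⟩, hy⟩)
        · exact Language.nil_mem_kstar L
        · obtain ⟨a, ha, b, hb, rfl⟩ := Language.mem_mul.1 hy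
          obtain ⟨U, rfl, hU⟩ := Language.mem_kstar.1 hu
          obtain ⟨W, rfl, hW⟩ := Language.mem_kstar.1 hb
          refine Language.mem_kstar.2 ⟨U ++ [v ++ a] ++ W, by simp, ?_⟩
          intro z hz
          simp only [List.mem_append, List.mem_singleton] at hz
          rcases hz with (hz | rfl) | hz
          · exact hU z hz
          · exact ha
          · exact hW z hz
      · intro h
        obtain ⟨W, hW, hWL⟩ := Language.mem_kstar.1 h
        clear h
        induction W generalizing x with
        | nil => left; simpa using hW
        | cons w W ih =>
          right
          rw [List.flatten_cons] at hW
          have hw : w ∈ L := hWL w (by simp)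
          have hWL' : ∀ z ∈ W, z ∈ L := fun z hz => hWL z (by simp [hz])
          rcases List.append_eq_append_iff.1 hW with ⟨c, rfl, rfl⟩ | ⟨c, rfl, hc⟩
          · exact ⟨_, ⟨[], x, rfl, Language.nil_mem_kstar L, rfl⟩,
              Language.mem_mul.2 ⟨c, hw, _, Language.join_mem_kstar hWL', rfl⟩⟩
          · rcases ih c hc.symm hWL' with ⟨rfl, rfl⟩ | ⟨_, ⟨u, v, rfl, hu, rfl⟩, hy⟩
            · refine ⟨_, ⟨[], w, by simp, Language.nil_mem_kstar L, rfl⟩, ?_⟩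
              refine Language.mem_mul.2 ⟨[], ?_, [], Language.nil_mem_kstar L, rfl⟩
              simpa [Language.mem_leftQuotient] using hw
            · refine ⟨_, ⟨w ++ u, v, by simp, ?_, rfl⟩, hy⟩
              obtain ⟨U, rfl, hU⟩ := Language.mem_kstar.1 hu
              exact Language.mem_kstar.2 ⟨w :: U, by simp, by
                intro z hz
                rcases List.mem_cons.1 hz with rfl | hz
                · exact hw
                · exact hU z hz⟩

/-- `KPath E S p l q`: the labelled transition relation `E` has a path from `p` to `q` spelling `l`
all of whose intermediate states lie in `S`. -/
inductive KPath {P Q : Type} (E : P → Q → P → Prop) (S : Set P) : P → List Q → P → Prop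
  | nil (p : P) : KPath E S p [] p
  | single {p p' : P} {a : Q} : E p a p' → KPath E S p [a] p'
  | cons {p p' q : P} {a : Q} {l : List Q} :
      E p a p' → p' ∈ S → KPath E S p' l q → KPath E S p (a :: l) q

namespace KPath

variable {P Q : Type} {E : P → Q → P → Prop} {S : Set P}

theorem mono {S' : Set P} (h : S ⊆ S') {p q : P} {l : List Q} (hp : KPath E S p l q) :
    KPath E S' p l q := by
  induction hp with
  | nil p => exact .nil p
  | single e => exact .single e
  | cons e hs _ ih => exact .cons e (h hs) ih

theorem append {p q r : P} {l l' : List Q} (h : KPath E S p l q) (hq : q ∈ S)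
    (hr : KPath E S q l' r) : KPath E S p (l ++ l') r := by
  induction h with
  | nil p => exact hr
  | single e => exact .cons e hq hr
  | cons e hs _ ih => exact .cons e hs (ih hq hr)

/-- The language of words spelled by `S`-paths from `p` to `q`. -/
def lang (E : P → Q → P → Prop) (S : Set P) (p q : P) : Language Q := {l | KPath E S p l q}

/-- Kleene's recursion: a path through `insert s S` is cut at its visits to `s`. -/
theorem lang_insert (s p q : P) : lang E (insert s S) p q =
    lang E S p q + lang E S p s * (KStar.kstar (lang E S s s) * lang E S s q) := by
  refine Language.ext fun l => ⟨fun h => ?_, fun h => ?_⟩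
  · change KPath E (insert s S) p l q at h
    rw [Language.mem_add]
    induction h with
    | nil p => exact Or.inl (.nil p)
    | single e => exact Or.inl (.single e)
    | @cons p p' q a l e hs _ ih =>
      rcases hs with rfl | hs
      · right
        refine Language.mem_mul.2 ⟨[a], .single e, l, ?_, rfl⟩
        rcases ih with ih | ih
        · exact Language.mem_mul.2 ⟨[], Language.nil_mem_kstar _, l, ih, rfl⟩
        · obtain ⟨x, hx, _, h, rfl⟩ := Language.mem_mul.1 ih
          obtain ⟨y, hy, z, hz, rfl⟩ := Language.mem_mul.1 h
          refine Language.mem_mul.2 ⟨x ++ y, ?_, z, hz, by simp⟩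
          obtain ⟨U, rfl, hU⟩ := Language.mem_kstar.1 hy
          exact Language.mem_kstar.2 ⟨x :: U, by simp, by
            intro z hz
            rcases List.mem_cons.1 hz with rfl | hz
            · exact hx
            · exact hU z hz⟩
      · rcases ih with ih | ih
        · exact Or.inl (.cons e hs ih)
        · obtain ⟨x, hx, y, h, rfl⟩ := Language.mem_mul.1 ih
          exact Or.inr (Language.mem_mul.2 ⟨a :: x, .cons e hs hx, y, h, rfl⟩)
  · have hsub : S ⊆ insert s S := Set.subset_insert s S
    have hs : s ∈ insert s S := Set.mem_insert s S
    rcases (Language.mem_add _ _ _).1 h with h₁ | h₁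
    · exact KPath.mono hsub h₁
    · obtain ⟨x, hx, _, h', rfl⟩ := Language.mem_mul.1 h₁
      obtain ⟨y, hy, z, hz, rfl⟩ := Language.mem_mul.1 h'
      refine (KPath.mono hsub hx).append hs ?_
      refine KPath.append (q := s) ?_ hs (KPath.mono hsub hz)
      obtain ⟨U, rfl, hU⟩ := Language.mem_kstar.1 hy
      clear h h₁ h' hy
      induction U with
      | nil => exact .nil s
      | cons u U ih =>
        exact (KPath.mono hsub (hU u (by simp))).append hs (ih fun z hz => hU z (by simp [hz]))

/-- A finite union of singletons `{[a]}` is given by a regular expression. -/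
theorem exists_regex_letters [Finite Q] (C : Set Q) :
    ∃ r : RegularExpression Q, ∀ l, l ∈ r.matches' ↔ ∃ a ∈ C, l = [a] := by
  induction C, C.toFinite using Set.Finite.induction_on with
  | empty => exact ⟨0, fun l => by simp⟩
  | @insert a C _ _ ih =>
    obtain ⟨r, hr⟩ := ih
    refine ⟨RegularExpression.char a + r, fun l => ?_⟩
    rw [RegularExpression.matches'_add, Language.mem_add, hr]
    change l = [a] ∨ _ ↔ _
    simp

theorem exists_regex [Finite Q] (hS : S.Finite) : ∀ p q : P,
    ∃ r : RegularExpression Q, r.matches' = lang E S p q := by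
  induction S, hS using Set.Finite.induction_on with
  | empty =>
    intro p q
    obtain ⟨r, hr⟩ := exists_regex_letters {a | E p a q}
    have key : ∀ l, KPath E ∅ p l q ↔ (l = [] ∧ p = q) ∨ ∃ a ∈ {a | E p a q}, l = [a] := by
      intro l
      constructor
      · rintro (_ | e | ⟨_, h, _⟩)
        · simp
        · exact Or.inr ⟨_, e, rfl⟩
        · exact h.elim
      · rintro (⟨rfl, rfl⟩ | ⟨a, e, rfl⟩)
        · exact .nil p
        · exact .single e
    by_cases h : p = q
    · refine ⟨1 + r, Language.ext fun l => ?_⟩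
      rw [RegularExpression.matches'_add, Language.mem_add, hr]
      refine Iff.trans ?_ (key l).symm
      simp [h, Language.mem_one]
    · refine ⟨r, Language.ext fun l => ?_⟩
      rw [hr]
      refine Iff.trans ?_ (key l).symm
      simp [h]
  | @insert s S _ _ ih =>
    intro p q
    obtain ⟨r₁, h₁⟩ := ih p q
    obtain ⟨r₂, h₂⟩ := ih p s
    obtain ⟨r₃, h₃⟩ := ih s s
    obtain ⟨r₄, h₄⟩ := ih s q
    refine ⟨r₁ + r₂ * (r₃.star * r₄), ?_⟩
    rw [lang_insert, RegularExpression.matches'_add, RegularExpression.matches'_mul,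
      RegularExpression.matches'_mul, RegularExpression.matches'_star, h₁, h₂, h₃, h₄]

end KPath

/-- The words folded (from the right) by a finite-state action `f` from `p₀` to `p` form a language
given by a regular expression. -/
theorem exists_regex_foldr {P Q : Type} [Finite P] [Finite Q] (f : Q → P → P) (p₀ p : P) :
    ∃ r : RegularExpression Q, ∀ l, l ∈ r.matches' ↔ l.foldr f p₀ = p := by
  obtain ⟨r, hr⟩ := KPath.exists_regex (E := fun p a p' => f a p' = p)
    (Set.finite_univ : (Set.univ : Set P).Finite) p p₀
  refine ⟨r, fun l => ?_⟩
  rw [hr]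
  clear hr
  change KPath _ _ _ _ _ ↔ _
  constructor
  · intro h
    induction h with
    | nil p => rfl
    | single e => exact e
    | cons e _ _ ih => simp only [List.foldr_cons, ih, e]
  · intro h
    induction l generalizing p with
    | nil => simp only [List.foldr_nil] at h; subst h; exact .nil _
    | cons a l ih => exact .cons h (Set.mem_univ _) (ih _ rfl)

/-! ### Bottom-up evaluation along first-child / next-sibling -/

namespace UTree

variable {A : Type} (T : UTree A)

/-- The nodes of the forest consisting of the subtrees rooted at the children `u·i, u·(i+1), …`
of `u`. -/
def forest (u : Node) (i : ℕ) : Set Node := {t | t ∈ T.dom ∧ ∃ j, i ≤ j ∧ u ++ [j] <+: t}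

variable {T}

theorem forest_finite (u : Node) (i : ℕ) : (T.forest u i).Finite :=
  T.dom.finite_toSet.subset fun _ h => h.1

theorem child_mem_of_le {u : Node} {i j : ℕ} (h : u ++ [j] ∈ T.dom) (hij : i ≤ j) :
    u ++ [i] ∈ T.dom := by
  rcases hij.eq_or_lt with rfl | hij
  · exact h
  · exact T.sib_closed h hij

theorem forest_of_notMem {u : Node} {i : ℕ} (h : u ++ [i] ∉ T.dom) : T.forest u i = ∅ := by
  refine Set.eq_empty_of_forall_notMem ?_
  rintro t ⟨ht, j, hij, hj⟩
  exact h (child_mem_of_le (T.prefix_closed ht hj) hij)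

theorem mem_forest_iff {u t : Node} {i : ℕ} (h : u ++ [i] ∈ T.dom) :
    t ∈ T.forest u i ↔ t = u ++ [i] ∨ t ∈ T.forest (u ++ [i]) 0 ∨ t ∈ T.forest u (i + 1) := by
  constructor
  · rintro ⟨ht, j, hij, hj⟩
    rcases hij.eq_or_lt with rfl | hij
    · obtain ⟨r, rfl⟩ := hj
      rcases r with _ | ⟨k, r⟩
      · left; simp
      · right; left
        exact ⟨ht, k, Nat.zero_le k, r, by simp⟩
    · exact Or.inr (Or.inr ⟨ht, j, hij, hj⟩)
  · rintro (rfl | ⟨ht, j, -, hj⟩ | ⟨ht, j, hij, hj⟩)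
    · exact ⟨h, i, le_rfl, List.prefix_rfl⟩
    · exact ⟨ht, i, le_rfl, (List.prefix_append _ _).trans hj⟩
    · exact ⟨ht, j, by omega, hj⟩

theorem mem_dom_iff {t : Node} : t ∈ T.dom ↔ t = [] ∨ t ∈ T.forest [] 0 := by
  constructor
  · intro ht
    rcases t with _ | ⟨k, r⟩
    · exact Or.inl rfl
    · exact Or.inr ⟨ht, k, Nat.zero_le k, r, by simp⟩
  · rintro (rfl | h)
    · exact T.nil_mem
    · exact h.1

theorem nil_notMem_forest (u : Node) (i : ℕ) : ([] : Node) ∉ T.forest u i := by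
  rintro ⟨-, j, -, h⟩
  simp at h

theorem prefix_singleton_inj {u t : Node} {i j : ℕ} (hi : u ++ [i] <+: t) (hj : u ++ [j] <+: t) :
    i = j := by
  have := (List.prefix_of_prefix_length_le hi hj (by simp)).eq_of_length (by simp)
  simpa using this

theorem self_notMem_forest_child (u : Node) : u ∉ T.forest u 0 := by
  rintro ⟨-, j, -, h⟩
  have := h.length_le
  simp at this

theorem notMem_forest_succ {u t : Node} {i : ℕ} (h : u ++ [i] <+: t) :
    t ∉ T.forest u (i + 1) := by
  rintro ⟨-, j, hij, hj⟩
  have := prefix_singleton_inj h hj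
  omega

theorem prefix_of_mem_forest_child {u t : Node} (h : t ∈ T.forest u 0) : u <+: t := by
  obtain ⟨-, j, -, h⟩ := h
  exact (List.prefix_append _ _).trans h

theorem forest_child_lt {u : Node} {i : ℕ} (h : u ++ [i] ∈ T.dom) :
    (T.forest (u ++ [i]) 0).ncard < (T.forest u i).ncard := by
  refine Set.ncard_lt_ncard ⟨fun t ht => (mem_forest_iff h).2 (Or.inr (Or.inl ht)), fun hs => ?_⟩
    (forest_finite _ _)
  exact self_notMem_forest_child _ (hs ((mem_forest_iff h).2 (Or.inl rfl)))

theorem forest_succ_lt {u : Node} {i : ℕ} (h : u ++ [i] ∈ T.dom) :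
    (T.forest u (i + 1)).ncard < (T.forest u i).ncard := by
  refine Set.ncard_lt_ncard ⟨fun t ht => (mem_forest_iff h).2 (Or.inr (Or.inr ht)), fun hs => ?_⟩
    (forest_finite _ _)
  exact notMem_forest_succ List.prefix_rfl (hs ((mem_forest_iff h).2 (Or.inl rfl)))

/-- Induction along first child and next sibling. -/
theorem forest_induction (T : UTree A) {motive : Node → ℕ → Prop}
    (empty : ∀ u i, u ++ [i] ∉ T.dom → motive u i)
    (node : ∀ u i, u ++ [i] ∈ T.dom → motive (u ++ [i]) 0 → motive u (i + 1) → motive u i)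
    (u : Node) (i : ℕ) : motive u i := by
  by_cases h : u ++ [i] ∈ T.dom
  · exact node u i h (forest_induction T empty node (u ++ [i]) 0)
      (forest_induction T empty node u (i + 1))
  · exact empty u i h
termination_by (T.forest u i).ncard
decreasing_by
  · exact forest_child_lt h
  · exact forest_succ_lt h

section Val

variable {B P : Type}

/-- The state of a deterministic bottom-up automaton (`init`, `step`) on the forest of the subtrees
at `u·i, u·(i+1), …`, where node `s` carries the letter `w s`.  The automaton works on the
first-child / next-sibling encoding: the state at `u·i` is computed from its letter, the state of
the forest of its children, and the state of the forest of its right siblings. -/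
noncomputable def val (T : UTree A) (init : P) (step : B → P → P → P) (w : Node → B)
    (u : Node) (i : ℕ) : P :=
  if h : u ++ [i] ∈ T.dom then
    step (w (u ++ [i])) (val T init step w (u ++ [i]) 0) (val T init step w u (i + 1))
  else init
termination_by (T.forest u i).ncard
decreasing_by
  · exact forest_child_lt h
  · exact forest_succ_lt h

/-- The state of the automaton (`init`, `step`) at the root; the root has no right sibling. -/
noncomputable def eval (T : UTree A) (init : P) (step : B → P → P → P) (w : Node → B) : P :=
  step (w []) (T.val init step w [] 0) init

variable {init : P} {step : B → P → P → P} {w : Node → B}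

theorem val_of_mem {u : Node} {i : ℕ} (h : u ++ [i] ∈ T.dom) :
    T.val init step w u i =
      step (w (u ++ [i])) (T.val init step w (u ++ [i]) 0) (T.val init step w u (i + 1)) := by
  rw [val, dif_pos h]

theorem val_of_notMem {u : Node} {i : ℕ} (h : u ++ [i] ∉ T.dom) :
    T.val init step w u i = init := by
  rw [val, dif_neg h]

theorem val_congr {w' : Node → B} (u : Node) (i : ℕ) (h : ∀ t ∈ T.forest u i, w t = w' t) :
    T.val init step w u i = T.val init step w' u i := by
  induction u, i using forest_induction T with
  | empty u i hm => rw [val_of_notMem hm, val_of_notMem hm]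
  | node u i hm ih₁ ih₂ =>
    rw [val_of_mem hm, val_of_mem hm, h _ ((mem_forest_iff hm).2 (Or.inl rfl)),
      ih₁ fun t ht => h t ((mem_forest_iff hm).2 (Or.inr (Or.inl ht))),
      ih₂ fun t ht => h t ((mem_forest_iff hm).2 (Or.inr (Or.inr ht)))]

theorem eval_congr {w' : Node → B} (h : ∀ t ∈ T.dom, w t = w' t) :
    T.eval init step w = T.eval init step w' := by
  rw [eval, eval, h [] T.nil_mem, val_congr [] 0 fun t ht => h t ht.1]

/-- A function obeying the recursion of `val` is `val`. -/
theorem val_eq (g : Node → ℕ → P) (h0 : ∀ u i, u ++ [i] ∉ T.dom → g u i = init)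
    (h1 : ∀ u i, u ++ [i] ∈ T.dom → g u i = step (w (u ++ [i])) (g (u ++ [i]) 0) (g u (i + 1)))
    (u : Node) (i : ℕ) : T.val init step w u i = g u i := by
  induction u, i using forest_induction T with
  | empty u i hm => rw [val_of_notMem hm, h0 u i hm]
  | node u i hm ih₁ ih₂ => rw [val_of_mem hm, ih₁, ih₂, h1 u i hm]

theorem val_prod {P' : Type} {init' : P'} {step' : B → P' → P' → P'} (u : Node) (i : ℕ) :
    T.val (init, init') (fun b p q => (step b p.1 q.1, step' b p.2 q.2)) w u i =
      (T.val init step w u i, T.val init' step' w u i) :=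
  val_eq (fun u i => (T.val init step w u i, T.val init' step' w u i))
    (fun u i h => by rw [val_of_notMem h, val_of_notMem h])
    (fun u i h => by rw [val_of_mem h, val_of_mem h]) u i

end Val

end UTree

/-! ### Recognizable properties of decorated trees -/

/-- The letters of decorated trees: a label, and the set of variables (first-order `Sum.inl x`,
set variables `Sum.inr X`) that mark the node. -/
abbrev Letter (A : Type) : Type := A × Set (ℕ ⊕ ℕ)

/-- A property of decorated trees is recognizable if it is decided by the state at the root of a
deterministic bottom-up automaton with finitely many states.  The alphabet is allowed to be
infinite. -/
def Recog {A : Type} (R : UTree A → (Node → Letter A) → Prop) : Prop :=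
  ∃ (P : Type) (_ : Finite P) (init : P) (step : Letter A → P → P → P) (acc : Set P),
    ∀ T w, R T w ↔ T.eval init step w ∈ acc

/-- Change the letter `b` so that the variable `k` marks it iff `c` holds. -/
def setLetter {A : Type} (b : Letter A) (k : ℕ ⊕ ℕ) (c : Prop) : Letter A :=
  (b.1, {j | (j = k ∧ c) ∨ (j ≠ k ∧ j ∈ b.2)})

/-- Change the decoration `w` so that the variable `k` marks exactly the nodes in `S`. -/
def setMark {A : Type} (w : Node → Letter A) (k : ℕ ⊕ ℕ) (S : Set Node) : Node → Letter A :=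
  fun s => setLetter (w s) k (s ∈ S)

theorem setMark_congr {A : Type} {w : Node → Letter A} {k : ℕ ⊕ ℕ} {S S' : Set Node} {t : Node}
    (h : t ∈ S ↔ t ∈ S') : setMark w k S t = setMark w k S' t := by
  simp only [setMark, h]

namespace Recog

variable {A : Type} {R R' : UTree A → (Node → Letter A) → Prop}

theorem congr (hR : Recog R) {T : UTree A} {w w' : Node → Letter A}
    (h : ∀ t ∈ T.dom, w t = w' t) : R T w ↔ R T w' := by
  obtain ⟨P, _, init, step, acc, hA⟩ := hR
  rw [hA, hA, UTree.eval_congr h]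

theorem not (hR : Recog R) : Recog fun T w => ¬ R T w := by
  obtain ⟨P, hP, init, step, acc, hA⟩ := hR
  exact ⟨P, hP, init, step, accᶜ, fun T w => not_congr (hA T w)⟩

theorem and (hR : Recog R) (hR' : Recog R') : Recog fun T w => R T w ∧ R' T w := by
  obtain ⟨P, hP, init, step, acc, hA⟩ := hR
  obtain ⟨P', hP', init', step', acc', hA'⟩ := hR'
  refine ⟨P × P', inferInstance, (init, init'), fun b p q => (step b p.1 q.1, step' b p.2 q.2),
    acc ×ˢ acc', fun T w => ?_⟩
  beta_reduce
  rw [hA, hA', UTree.eval, UTree.eval, UTree.eval, UTree.val_prod]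
  rfl

/-- Recognizable properties are closed under projection, by the subset construction. -/
theorem proj (hR : Recog R) (k : ℕ ⊕ ℕ) : Recog fun T w => ∃ S, R T (setMark w k S) := by
  obtain ⟨P, hP, init, step, acc, hA⟩ := hR
  let step' : Letter A → Set P → Set P → Set P := fun b X Y =>
    {p | ∃ c : Prop, ∃ x ∈ X, ∃ y ∈ Y, p = step (setLetter b k c) x y}
  refine ⟨Set P, inferInstance, {init}, step', {X | ∃ p ∈ X, p ∈ acc}, fun T w => ?_⟩
  have hval : ∀ u i, T.val {init} step' w u i =
      Set.range fun S : Set Node => T.val init step (setMark w k S) u i := by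
    refine UTree.val_eq _ (fun u i hm => ?_) (fun u i hm => ?_)
    · simp only [UTree.val_of_notMem hm, Set.range_const]
    · ext p
      constructor
      · rintro ⟨S, rfl⟩
        exact ⟨(u ++ [i]) ∈ S, _, ⟨S, rfl⟩, _, ⟨S, rfl⟩, UTree.val_of_mem hm⟩
      · rintro ⟨c, _, ⟨S₁, rfl⟩, _, ⟨S₂, rfl⟩, rfl⟩
        -- the three choices concern disjoint sets of nodes, so they can be glued
        refine ⟨{t | (t = u ++ [i] ∧ c) ∨ (t ∈ T.forest (u ++ [i]) 0 ∧ t ∈ S₁) ∨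
          (t ∈ T.forest u (i + 1) ∧ t ∈ S₂)}, ?_⟩
        refine (UTree.val_of_mem hm).trans ?_
        have h₁ : u ++ [i] ∉ T.forest (u ++ [i]) 0 := UTree.self_notMem_forest_child _
        have h₂ : u ++ [i] ∉ T.forest u (i + 1) := UTree.notMem_forest_succ List.prefix_rfl
        congr 1
        · simp [setMark, h₁, h₂]
        · refine UTree.val_congr _ _ fun t ht => setMark_congr ?_
          have h₃ : t ∉ T.forest u (i + 1) :=
            UTree.notMem_forest_succ (UTree.prefix_of_mem_forest_child ht)
          have h₄ : t ≠ u ++ [i] := fun h => h₁ (h ▸ ht)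
          simp [ht, h₃, h₄]
        · refine UTree.val_congr _ _ fun t ht => setMark_congr ?_
          have h₃ : t ∉ T.forest (u ++ [i]) 0 := fun h =>
            UTree.notMem_forest_succ (UTree.prefix_of_mem_forest_child h) ht
          have h₄ : t ≠ u ++ [i] := fun h => h₂ (h ▸ ht)
          simp [ht, h₃, h₄]
  simp only [hA]
  constructor
  · rintro ⟨S, hS⟩
    refine ⟨_, ⟨[] ∈ S, _, ?_, _, rfl, rfl⟩, hS⟩
    rw [hval]
    exact ⟨S, rfl⟩
  · rintro ⟨_, ⟨c, x, hx, _, rfl, rfl⟩, hp⟩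
    rw [hval] at hx
    obtain ⟨S, rfl⟩ := hx
    refine ⟨{t | (t = [] ∧ c) ∨ (t ≠ [] ∧ t ∈ S)}, ?_⟩
    convert hp using 1
    rw [UTree.eval]
    congr 1
    · simp [setMark]
    · refine UTree.val_congr _ _ fun t ht => setMark_congr ?_
      have : t ≠ [] := fun h => UTree.nil_notMem_forest _ _ (h ▸ ht)
      simp [this]

/-- "Some node carries a letter satisfying `ok`." -/
theorem exists_letter (ok : Letter A → Prop) : Recog fun T w => ∃ t ∈ T.dom, ok (w t) := by
  refine ⟨Prop, inferInstance, False, fun b p q => ok b ∨ p ∨ q, {p | p}, fun T w => ?_⟩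
  rw [UTree.eval, UTree.val_eq (fun u i => ∃ t ∈ T.forest u i, ok (w t))]
  · simp only [UTree.mem_dom_iff, or_and_right, exists_or, exists_eq_left, Set.mem_ofPred_eq,
      or_false]
  · intro u i hm
    simp [UTree.forest_of_notMem hm]
  · intro u i hm
    simp only [UTree.mem_forest_iff hm, or_and_right, exists_or, exists_eq_left]

/-- "Two different nodes are marked by `k`." -/
theorem exists_two (k : ℕ ⊕ ℕ) : Recog fun (T : UTree A) w =>
    ∃ t ∈ T.dom, ∃ s ∈ T.dom, t ≠ s ∧ k ∈ (w t).2 ∧ k ∈ (w s).2 := by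
  -- first component: some node is marked; second component: two nodes are marked
  refine ⟨Prop × Prop, inferInstance, (False, False), fun b p q =>
    (k ∈ b.2 ∨ p.1 ∨ q.1, p.2 ∨ q.2 ∨ (k ∈ b.2 ∧ p.1) ∨ (k ∈ b.2 ∧ q.1) ∨ (p.1 ∧ q.1)),
    {p | p.2}, fun T w => ?_⟩
  rw [UTree.eval, UTree.val_eq (fun u i => (∃ t ∈ T.forest u i, k ∈ (w t).2,
    ∃ t ∈ T.forest u i, ∃ t' ∈ T.forest u i, t ≠ t' ∧ k ∈ (w t).2 ∧ k ∈ (w t').2))]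
  · have := UTree.nil_notMem_forest (T := T) [] 0
    simp only [UTree.mem_dom_iff, Set.mem_ofPred_eq]
    grind
  · intro u i hm
    simp [UTree.forest_of_notMem hm]
  · intro u i hm
    have h₁ : u ++ [i] ∉ T.forest (u ++ [i]) 0 := UTree.self_notMem_forest_child _
    have h₂ : u ++ [i] ∉ T.forest u (i + 1) := UTree.notMem_forest_succ List.prefix_rfl
    have h₃ : ∀ t ∈ T.forest (u ++ [i]) 0, t ∉ T.forest u (i + 1) := fun t ht =>
      UTree.notMem_forest_succ (UTree.prefix_of_mem_forest_child ht)
    simp only [UTree.mem_forest_iff hm]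
    refine Prod.ext (propext ?_) (propext ?_) <;> dsimp only <;> grind

/-- "Exactly one node is marked by `k`." -/
theorem unique (k : ℕ ⊕ ℕ) : Recog fun (T : UTree A) w => ∃! t, t ∈ T.dom ∧ k ∈ (w t).2 := by
  have h := (exists_letter (A := A) fun b => k ∈ b.2).and (exists_two k).not
  convert h using 3 with T w
  simp only [ExistsUnique]
  grind

/-- "Some node marked by `k` has a descendant (or itself) marked by `l`." -/
theorem desc (k l : ℕ ⊕ ℕ) : Recog fun (T : UTree A) w =>
    ∃ t ∈ T.dom, ∃ s ∈ T.dom, t <+: s ∧ k ∈ (w t).2 ∧ l ∈ (w s).2 := by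
  -- first component: `l` occurs; second component: the pair has been found
  refine ⟨Prop × Prop, inferInstance, (False, False), fun b p q =>
    (l ∈ b.2 ∨ p.1 ∨ q.1, p.2 ∨ q.2 ∨ (k ∈ b.2 ∧ (l ∈ b.2 ∨ p.1))),
    {p | p.2}, fun T w => ?_⟩
  rw [UTree.eval, UTree.val_eq (fun u i => (∃ t ∈ T.forest u i, l ∈ (w t).2,
    ∃ t ∈ T.forest u i, ∃ t' ∈ T.forest u i, t <+: t' ∧ k ∈ (w t).2 ∧ l ∈ (w t').2))]
  · simp only [UTree.mem_dom_iff, Set.mem_ofPred_eq]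
    constructor
    · rintro ⟨t, rfl | ht, t', rfl | ht', h, hk, hl⟩
      · exact Or.inr (Or.inr ⟨hk, Or.inl hl⟩)
      · exact Or.inr (Or.inr ⟨hk, Or.inr ⟨t', ht', hl⟩⟩)
      · obtain rfl := List.prefix_nil.1 h
        exact (UTree.nil_notMem_forest _ _ ht).elim
      · exact Or.inl ⟨t, ht, t', ht', h, hk, hl⟩
    · rintro (⟨t, ht, t', ht', h, hk, hl⟩ | h | ⟨hk, hl | ⟨t', ht', hl⟩⟩)
      · exact ⟨t, Or.inr ht, t', Or.inr ht', h, hk, hl⟩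
      · exact h.elim
      · exact ⟨[], Or.inl rfl, [], Or.inl rfl, List.prefix_rfl, hk, hl⟩
      · exact ⟨[], Or.inl rfl, t', Or.inr ht', List.nil_prefix, hk, hl⟩
  · intro u i hm
    simp [UTree.forest_of_notMem hm]
  · intro u i hm
    have h₀ : ∀ t ∈ T.forest (u ++ [i]) 0, u ++ [i] <+: t := fun t ht =>
      UTree.prefix_of_mem_forest_child ht
    have h₁ : u ++ [i] <+: u ++ [i] := List.prefix_rfl
    have h₂ : ∀ t t', u ++ [i] <+: t → t <+: t' → t' ∉ T.forest u (i + 1) := fun _ _ h hp =>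
      UTree.notMem_forest_succ (h.trans hp)
    -- a node of the later siblings' forest is not a prefix of a node below `u·i`
    have h₃ : ∀ t ∈ T.forest u (i + 1), ∀ t', t <+: t' → ¬ u ++ [i] <+: t' := by
      rintro t ⟨-, j, hij, hj⟩ t' htt' h
      have := UTree.prefix_singleton_inj h (hj.trans htt')
      omega
    have h₄ : ∀ t ∈ T.forest (u ++ [i]) 0, ¬ t <+: u ++ [i] := by
      rintro t ⟨-, j, -, hj⟩ h
      have := (hj.trans h).length_le
      simp at this
    simp only [UTree.mem_forest_iff hm]
    refine Prod.ext (propext ?_) (propext ?_) <;> dsimp only <;> grind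

/-- "Some node other than the root is marked by `k`, and it or one of its right siblings is marked
by `l`; the root is not marked by `k`." -/
theorem sib (k l : ℕ ⊕ ℕ) : Recog fun (T : UTree A) w => k ∉ (w []).2 ∧
    ∃ u i j, i ≤ j ∧ u ++ [j] ∈ T.dom ∧ k ∈ (w (u ++ [i])).2 ∧ l ∈ (w (u ++ [j])).2 := by
  -- `l` occurs at top level; the pair has been found; the first tree has its root marked by `k`
  refine ⟨Prop × Prop × Prop, inferInstance, (False, False, False), fun b p q =>
    (l ∈ b.2 ∨ q.1, p.2.1 ∨ q.2.1 ∨ (k ∈ b.2 ∧ (l ∈ b.2 ∨ q.1)), k ∈ b.2),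
    {p | p.2.1 ∧ ¬ p.2.2}, fun T w => ?_⟩
  rw [UTree.eval, UTree.val_eq (fun u i => (∃ j, i ≤ j ∧ u ++ [j] ∈ T.dom ∧ l ∈ (w (u ++ [j])).2,
    ∃ x m n, x ++ [m] ∈ T.forest u i ∧ m ≤ n ∧ x ++ [n] ∈ T.dom ∧
      k ∈ (w (x ++ [m])).2 ∧ l ∈ (w (x ++ [n])).2,
    u ++ [i] ∈ T.dom ∧ k ∈ (w (u ++ [i])).2))]
  · have h : ∀ x m n, m ≤ n → x ++ [n] ∈ T.dom → x ++ [m] ∈ T.forest [] 0 := by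
      intro x m n hmn hx
      rcases UTree.mem_dom_iff.1 (UTree.child_mem_of_le hx hmn) with h | h
      · simp at h
      · exact h
    simp only [Set.mem_ofPred_eq]
    constructor
    · rintro ⟨h0, u, i, j, hij, hj, hk, hl⟩
      exact ⟨Or.inl ⟨u, i, j, h u i j hij hj, hij, hj, hk, hl⟩, h0⟩
    · rintro ⟨⟨u, i, j, -, hij, hj, hk, hl⟩ | h' | ⟨hk, -⟩, h0⟩
      · exact ⟨h0, u, i, j, hij, hj, hk, hl⟩
      · exact h'.elim
      · exact (h0 hk).elim
  · intro u i hm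
    have : ∀ j, i ≤ j → u ++ [j] ∉ T.dom := fun j hij h => hm (UTree.child_mem_of_le h hij)
    simp only [UTree.forest_of_notMem hm]
    refine Prod.ext (propext ?_) (Prod.ext (propext ?_) (propext ?_)) <;> dsimp only <;> grind
  · intro u i hm
    refine Prod.ext (propext ?_) (Prod.ext (propext ⟨?_, ?_⟩) (propext ?_)) <;> dsimp only
    · grind
    · rintro ⟨x, m, n, hx, hmn, hn, hk, hl⟩
      rcases (UTree.mem_forest_iff hm).1 hx with h | h | h
      · obtain ⟨rfl, rfl⟩ : x = u ∧ m = i := by simpa using h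
        refine Or.inr (Or.inr ⟨hk, ?_⟩)
        rcases hmn.eq_or_lt with rfl | hmn
        · exact Or.inl hl
        · exact Or.inr ⟨n, hmn, hn, hl⟩
      · exact Or.inl ⟨x, m, n, h, hmn, hn, hk, hl⟩
      · exact Or.inr (Or.inl ⟨x, m, n, h, hmn, hn, hk, hl⟩)
    · rintro (⟨x, m, n, h, hr⟩ | ⟨x, m, n, h, hr⟩ | ⟨hk, hl | ⟨j, hj, hjd, hl⟩⟩)
      · exact ⟨x, m, n, (UTree.mem_forest_iff hm).2 (Or.inr (Or.inl h)), hr⟩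
      · exact ⟨x, m, n, (UTree.mem_forest_iff hm).2 (Or.inr (Or.inr h)), hr⟩
      · exact ⟨u, i, i, (UTree.mem_forest_iff hm).2 (Or.inl rfl), le_rfl, hm, hk, hl⟩
      · exact ⟨u, i, j, (UTree.mem_forest_iff hm).2 (Or.inl rfl), by omega, hjd, hk, hl⟩
    · grind

end Recog

/-! ### From MSO formulas to bottom-up automata -/

/-- The decoration of `T` encoding the valuations `v` and `V`. -/
def deco {A : Type} (T : UTree A) (v : ℕ → Node) (V : ℕ → Set Node) : Node → Letter A :=
  fun s => (T.label s, {k | Sum.elim (fun x => v x = s) (fun X => s ∈ V X) k})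

section Deco

variable {A : Type} {T : UTree A} {v : ℕ → Node} {V : ℕ → Set Node}

theorem inl_mem_deco {x : ℕ} {s : Node} : Sum.inl x ∈ (deco T v V s).2 ↔ v x = s := Iff.rfl

theorem inr_mem_deco {X : ℕ} {s : Node} : Sum.inr X ∈ (deco T v V s).2 ↔ s ∈ V X := Iff.rfl

theorem deco_update_set (n : ℕ) (S : Set Node) :
    deco T v (Function.update V n S) = setMark (deco T v V) (Sum.inr n) S := by
  funext s
  refine Prod.ext rfl (Set.ext fun k => ?_)
  rcases k with x | X
  · simp [deco, setMark, setLetter]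
  · by_cases h : X = n
    · subst h; simp [deco, setMark, setLetter]
    · simp [deco, setMark, setLetter, h]

theorem deco_update_node (n : ℕ) (s : Node) :
    deco T (Function.update v n s) V = setMark (deco T v V) (Sum.inl n) {s} := by
  funext t
  refine Prod.ext rfl (Set.ext fun k => ?_)
  rcases k with x | X
  · by_cases h : x = n
    · subst h; simp [deco, setMark, setLetter, eq_comm]
    · simp [deco, setMark, setLetter, h]
  · simp [deco, setMark, setLetter]

end Deco

/-- Every MSO formula is, on valuations whose first-order variables denote nodes of the tree, a
recognizable property of the decorated tree. -/
theorem MSO.exists_recog {A : Type} (φ : MSO A) :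
    ∃ R : UTree A → (Node → Letter A) → Prop, Recog R ∧
      ∀ T v V, (∀ x, v x ∈ T.dom) → (Sat T v V φ ↔ R T (deco T v V)) := by
  induction φ with
  | eq x y =>
    refine ⟨_, Recog.exists_letter fun b => Sum.inl x ∈ b.2 ∧ Sum.inl y ∈ b.2, fun T v V hv => ?_⟩
    simp only [inl_mem_deco, Sat]
    exact ⟨fun h => ⟨v x, hv x, rfl, h.symm⟩, fun ⟨t, _, h, h'⟩ => h.trans h'.symm⟩
  | desc x y =>
    refine ⟨_, Recog.desc (Sum.inl x) (Sum.inl y), fun T v V hv => ?_⟩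
    simp only [inl_mem_deco, Sat, UTree.descR]
    constructor
    · rintro ⟨hx, hy, h⟩
      exact ⟨_, hx, _, hy, h, rfl, rfl⟩
    · rintro ⟨_, hx, _, hy, h, rfl, rfl⟩
      exact ⟨hx, hy, h⟩
  | sib x y =>
    refine ⟨_, Recog.sib (Sum.inl x) (Sum.inl y), fun T v V hv => ?_⟩
    simp only [inl_mem_deco, Sat, UTree.sibR]
    constructor
    · rintro ⟨hx, hy, u, i, j, hi, hj, hij⟩
      exact ⟨by simp [hi], u, i, j, hij, hj ▸ hy, hi, hj⟩
    · rintro ⟨-, u, i, j, hij, hd, hi, hj⟩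
      exact ⟨hv x, hv y, u, i, j, hi, hj, hij⟩
  | lab a x =>
    refine ⟨_, Recog.exists_letter fun b => Sum.inl x ∈ b.2 ∧ b.1 = a, fun T v V hv => ?_⟩
    simp only [inl_mem_deco, Sat]
    constructor
    · rintro ⟨hx, h⟩
      exact ⟨_, hx, rfl, h⟩
    · rintro ⟨_, hx, rfl, h⟩
      exact ⟨hx, h⟩
  | mem X x =>
    refine ⟨_, Recog.exists_letter fun b => Sum.inl x ∈ b.2 ∧ Sum.inr X ∈ b.2, fun T v V hv => ?_⟩
    simp only [inl_mem_deco, inr_mem_deco, Sat]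
    constructor
    · intro h
      exact ⟨_, hv x, rfl, h⟩
    · rintro ⟨_, -, rfl, h⟩
      exact h
  | not φ ih =>
    obtain ⟨R, hR, h⟩ := ih
    exact ⟨_, hR.not, fun T v V hv => not_congr (h T v V hv)⟩
  | and φ ψ ihφ ihψ =>
    obtain ⟨R, hR, h⟩ := ihφ
    obtain ⟨R', hR', h'⟩ := ihψ
    exact ⟨_, hR.and hR', fun T v V hv => and_congr (h T v V hv) (h' T v V hv)⟩
  | exFO n φ ih =>
    obtain ⟨R, hR, h⟩ := ih
    refine ⟨_, (hR.and (Recog.unique (Sum.inl n))).proj (Sum.inl n), fun T v V hv => ?_⟩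
    have hmark : ∀ (S : Set Node) (t : Node),
        Sum.inl n ∈ (setMark (deco T v V) (Sum.inl n) S t).2 ↔ t ∈ S := by
      intro S t
      simp [setMark, setLetter]
    have hsat : ∀ s ∈ T.dom, (Sat T (Function.update v n s) V φ ↔
        R T (setMark (deco T v V) (Sum.inl n) {s})) := by
      intro s hs
      rw [h, deco_update_node]
      intro x
      by_cases hx : x = n
      · subst hx; simpa using hs
      · simpa [hx] using hv x
    simp only [Sat, hmark]
    constructor
    · rintro ⟨s, hs, hφ⟩
      exact ⟨{s}, (hsat s hs).1 hφ, s, ⟨hs, rfl⟩, fun t ht => ht.2⟩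
    · rintro ⟨S, hφ, s, ⟨hs, hsS⟩, hu⟩
      refine ⟨s, hs, (hsat s hs).2 ((hR.congr fun t ht => setMark_congr ?_).1 hφ)⟩
      exact ⟨fun htS => hu t ⟨ht, htS⟩, fun h => (Set.mem_singleton_iff.1 h) ▸ hsS⟩
  | exSO n φ ih =>
    obtain ⟨R, hR, h⟩ := ih
    refine ⟨_, hR.proj (Sum.inr n), fun T v V hv => ?_⟩
    simp only [Sat]
    constructor
    · rintro ⟨S, -, hφ⟩
      rw [h _ _ _ hv, deco_update_set] at hφ
      exact ⟨S, hφ⟩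
    · rintro ⟨S, hφ⟩
      refine ⟨S ∩ T.dom, Set.inter_subset_right, ?_⟩
      rw [h _ _ _ hv, deco_update_set]
      refine (hR.congr fun t ht => setMark_congr ?_).1 hφ
      simp [ht]

/-! ### Lists of children -/

namespace UTree

variable {A : Type} {T : UTree A}

theorem mem_dom_iff_lt_childCount (u : Node) (i : ℕ) :
    u ++ [i] ∈ T.dom ↔ i < T.childCount u := by
  set C : Set ℕ := {i | u ++ [i] ∈ T.dom} with hC
  have hfin : C.Finite := T.dom.finite_toSet.preimage (f := fun i => u ++ [i])
    (fun i _ j _ h => by simpa using h)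
  have hlow : IsLowerSet C := fun j i hij hj => child_mem_of_le hj hij
  obtain ⟨n, hn⟩ : ∃ n, C = Set.Iio n := by
    rcases hlow.eq_univ_or_Iio with h | h
    · exact (Set.infinite_univ (h ▸ hfin)).elim
    · exact h
  have hcount : T.childCount u = n := by
    change C.ncard = n
    rw [hn, Set.ncard_eq_toFinset_card']
    simp
  rw [hcount]
  change i ∈ C ↔ _
  rw [hn]
  rfl

/-- The children `u·i, u·(i+1), …` of `u`. -/
noncomputable def childrenFrom (T : UTree A) (u : Node) (i : ℕ) : List Node :=
  (List.range' i (T.childCount u - i)).map fun j => u ++ [j]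

theorem childrenList_eq (u : Node) : T.childrenList u = T.childrenFrom u 0 := by
  simp [childrenList, childrenFrom, List.range_eq_range']

theorem childrenFrom_of_notMem {u : Node} {i : ℕ} (h : u ++ [i] ∉ T.dom) :
    T.childrenFrom u i = [] := by
  rw [mem_dom_iff_lt_childCount] at h
  simp [childrenFrom, Nat.sub_eq_zero_of_le (not_lt.1 h)]

theorem childrenFrom_of_mem {u : Node} {i : ℕ} (h : u ++ [i] ∈ T.dom) :
    T.childrenFrom u i = (u ++ [i]) :: T.childrenFrom u (i + 1) := by
  rw [mem_dom_iff_lt_childCount] at h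
  have : T.childCount u - i = (T.childCount u - (i + 1)) + 1 := by omega
  rw [childrenFrom, this, List.range'_succ]
  rfl

end UTree

/-! ### From bottom-up automata to NUTA -/

/-- The NUTA of a bottom-up automaton guesses, at every node, the label together with the state of
the forest of its children; the horizontal language checks the latter guess by folding `step` over
the children. -/
theorem regular_of_recog {A : Type} [Finite A] {R : UTree A → (Node → Letter A) → Prop}
    (hR : Recog R) :
    RegularLang {T : UTree A | R T (deco T (fun _ => []) (fun _ => ∅))} := by
  classical
  obtain ⟨P, _, init, step, acc, hA⟩ := hR
  -- below the root no variable marks a node; the root is marked by all first-order variables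
  let inner : A × P → P → P := fun q p => step (q.1, ∅) q.2 p
  let root : A → Letter A := fun a => (a, Set.range Sum.inl)
  choose r hr using fun p => exists_regex_foldr inner init p
  refine ⟨⟨A × P, Fintype.ofFinite _, {q | step (root q.1) q.2 init ∈ acc},
    fun q a => if q.1 = a then r q.2 else 0⟩, fun T => ?_⟩
  set w := deco T (fun _ => []) (fun _ => ∅) with hw
  have hδ : ∀ (q : A × P) (a : A) (l : List (A × P)),
      l ∈ (if q.1 = a then r q.2 else 0 : RegularExpression (A × P)).matches' ↔
        q.1 = a ∧ l.foldr inner init = q.2 := by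
    intro q a l
    split_ifs with h
    · simp [h, hr]
    · simp [h]
  have hroot : w [] = root (T.label []) := by
    refine Prod.ext rfl (Set.ext fun k => ?_)
    rcases k with x | X <;> simp [hw, deco, root]
  have hinner : ∀ u i, w (u ++ [i]) = (T.label (u ++ [i]), ∅) := by
    intro u i
    refine Prod.ext rfl (Set.ext fun k => ?_)
    rcases k with x | X <;> simp [hw, deco]
  -- folding over correctly guessed children computes the state of their forest
  have hfold : ∀ (ρ : Node → A × P), (∀ s ∈ T.dom, s ≠ [] → (ρ s).1 = T.label s ∧
      (ρ s).2 = T.val init step w s 0 ∨ ((ρ s).1 = T.label s ∧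
        ((T.childrenList s).map ρ).foldr inner init = (ρ s).2)) →
      ∀ u i, ((T.childrenFrom u i).map ρ).foldr inner init = T.val init step w u i := by
    intro ρ hρ u i
    induction u, i using UTree.forest_induction T with
    | empty u i hm => rw [UTree.childrenFrom_of_notMem hm, UTree.val_of_notMem hm]; rfl
    | node u i hm ih₁ ih₂ =>
      rw [UTree.childrenFrom_of_mem hm, UTree.val_of_mem hm, List.map_cons, List.foldr_cons, ih₂,
        hinner]
      rcases hρ _ hm (by simp) with ⟨h₁, h₂⟩ | ⟨h₁, h₂⟩
      · simp only [inner, h₁, h₂]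
      · rw [UTree.childrenList_eq, ih₁] at h₂
        simp only [inner, h₁, ← h₂]
  rw [Set.mem_ofPred_eq, ← hw, hA, UTree.eval, hroot]
  constructor
  · rintro ⟨ρ, hrun, hacc⟩
    have hrun' : ∀ s ∈ T.dom, (ρ s).1 = T.label s ∧
        ((T.childrenList s).map ρ).foldr inner init = (ρ s).2 :=
      fun s hs => (hδ _ _ _).1 (hrun s hs)
    have h := hrun' [] T.nil_mem
    rw [UTree.childrenList_eq, hfold ρ fun s hs _ => Or.inr (hrun' s hs)] at h
    change step (root (ρ []).1) (ρ []).2 init ∈ acc at hacc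
    rwa [h.1, ← h.2] at hacc
  · intro h
    refine ⟨fun s => (T.label s, T.val init step w s 0), fun s hs => (hδ _ _ _).2 ⟨rfl, ?_⟩, h⟩
    rw [UTree.childrenList_eq]
    exact hfold _ (fun s hs _ => Or.inl ⟨rfl, rfl⟩) s 0

/-! ### Derived connectives and guessing a colouring in MSO -/

/-- `φ` defines the binary relation `K` on nodes, through its first-order variables `0` and `1`. -/
def MSO.Defines₂ {A : Type} (φ : MSO A) (K : UTree A → Node → Node → Prop) : Prop :=
  ∀ (T : UTree A) (v : ℕ → Node) (V : ℕ → Set Node), v 0 ∈ T.dom → v 1 ∈ T.dom →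
    (φ.Sat T v V ↔ K T (v 0) (v 1))

namespace MSO

variable {A : Type}

/-- Disjunction, as a derived connective. -/
def or (φ ψ : MSO A) : MSO A := .not (.and (.not φ) (.not ψ))

/-- Implication, as a derived connective. -/
def imp (φ ψ : MSO A) : MSO A := .not (.and φ (.not ψ))

/-- Universal first-order quantification, as a derived connective. -/
def allFO (n : ℕ) (φ : MSO A) : MSO A := .not (.exFO n (.not φ))

section Sat

variable {T : UTree A} {v : ℕ → Node} {V : ℕ → Set Node} {φ ψ : MSO A}

@[simp] theorem sat_or : Sat T v V (φ.or ψ) ↔ Sat T v V φ ∨ Sat T v V ψ := by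
  simp only [or, Sat]; tauto

@[simp] theorem sat_imp : Sat T v V (φ.imp ψ) ↔ (Sat T v V φ → Sat T v V ψ) := by
  simp only [imp, Sat]; tauto

@[simp] theorem sat_allFO {n : ℕ} :
    Sat T v V (φ.allFO n) ↔ ∀ s ∈ T.dom, Sat T (Function.update v n s) V φ := by
  simp [allFO, Sat]

end Sat

/-- Finite conjunctions of formulas. -/
theorem exists_forall {ι : Type} [Finite ι] (φ : ι → MSO A) :
    ∃ ψ : MSO A, ∀ T v V, Sat T v V ψ ↔ ∀ i, Sat T v V (φ i) := by
  classical
  have := Fintype.ofFinite ι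
  have key : ∀ s : Finset ι, ∃ ψ : MSO A, ∀ T v V, Sat T v V ψ ↔ ∀ i ∈ s, Sat T v V (φ i) := by
    intro s
    induction s using Finset.induction_on with
    | empty => exact ⟨.eq 0 0, fun T v V => by simp [Sat]⟩
    | insert i s _ ih =>
      obtain ⟨ψ, hψ⟩ := ih
      exact ⟨.and (φ i) ψ, fun T v V => by simp [Sat, hψ]⟩
  obtain ⟨ψ, hψ⟩ := key Finset.univ
  exact ⟨ψ, fun T v V => by simp [hψ]⟩

/-- Finite disjunctions of formulas. -/
theorem exists_exists {ι : Type} [Finite ι] (φ : ι → MSO A) :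
    ∃ ψ : MSO A, ∀ T v V, Sat T v V ψ ↔ ∃ i, Sat T v V (φ i) := by
  obtain ⟨ψ, hψ⟩ := exists_forall fun i => (φ i).not
  exact ⟨ψ.not, fun T v V => by simp [Sat, hψ]⟩

/-- A formula whose truth value is a given proposition. -/
theorem exists_const (p : Prop) : ∃ ψ : MSO A, ∀ T v V, Sat T v V ψ ↔ p := by
  by_cases hp : p
  · exact ⟨.eq 0 0, fun T v V => by simp [Sat, hp]⟩
  · exact ⟨.not (.eq 0 0), fun T v V => by simp [Sat, hp]⟩

/-- Quantification over the set variables `0, …, n - 1` simultaneously. -/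
theorem exists_exSO (φ : MSO A) (n : ℕ) :
    ∃ ψ : MSO A, ∀ T v V, Sat T v V ψ ↔ ∃ W : ℕ → Set Node,
      (∀ i < n, W i ⊆ ↑T.dom) ∧ (∀ i, n ≤ i → W i = V i) ∧ Sat T v W φ := by
  induction n with
  | zero =>
    refine ⟨φ, fun T v V => ⟨fun h => ⟨V, by simp, by simp, h⟩, ?_⟩⟩
    rintro ⟨W, -, hW, h⟩
    rwa [show W = V from funext fun i => hW i (Nat.zero_le i)] at h
  | succ n ih =>
    obtain ⟨ψ, hψ⟩ := ih
    refine ⟨.exSO n ψ, fun T v V => ?_⟩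
    simp only [Sat, hψ]
    constructor
    · rintro ⟨S, hS, W, hW, hWV, h⟩
      refine ⟨W, fun i hi => ?_, fun i hi => ?_, h⟩
      · rcases Nat.lt_succ_iff_lt_or_eq.1 hi with hi | rfl
        · exact hW i hi
        · rw [hWV i le_rfl, Function.update_self]; exact hS
      · rw [hWV i (by omega), Function.update_of_ne (by omega)]
    · rintro ⟨W, hW, hWV, h⟩
      refine ⟨W n, hW n (by omega), W, fun i hi => hW i (by omega), fun i hi => ?_, h⟩
      rcases hi.eq_or_lt with rfl | hi
      · simp
      · rw [hWV i hi, Function.update_of_ne (by omega)]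

/-- Existence of a colouring of the nodes by finitely many colours that satisfies finitely many
constraints, each relating the colours of two nodes in a definable relation and the label of the
first one, is expressible.  The formula guesses one set variable per colour and asks that these
sets cover the tree and that every choice of colours they allow satisfies the constraints; the sets
need not be disjoint. -/
theorem exists_colouring [Finite A] {P ι : Type} [Finite P] [Finite ι]
    (K : ι → UTree A → Node → Node → Prop) (hK : ∀ k, ∃ φ : MSO A, φ.Defines₂ (K k))
    (ok : ι → A → P → P → Prop) :
    ∃ φ : MSO A, ∀ T v V, Sat T v V φ ↔ ∃ σ : Node → P,
      ∀ k, ∀ s ∈ T.dom, ∀ t ∈ T.dom, K k T s t → ok k (T.label s) (σ s) (σ t) := by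
  obtain ⟨n, ⟨e⟩⟩ := Finite.exists_equiv_fin P
  choose κ hκ using hK
  choose test htest using fun x : ι × A × P × P =>
    exists_const (A := A) (ok x.1 x.2.1 x.2.2.1 x.2.2.2)
  obtain ⟨cover, hcover⟩ := exists_exists fun p : P => (MSO.mem (e p) 0 : MSO A)
  obtain ⟨constr, hlocal⟩ := exists_forall fun x : ι × A × P × P =>
    imp (κ x.1) (imp (.lab x.2.1 0) (imp (.mem (e x.2.2.1) 0) (imp (.mem (e x.2.2.2) 1) (test x))))
  obtain ⟨ψ, hψ⟩ := exists_exSO (.and (allFO 0 cover) (allFO 0 (allFO 1 constr))) n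
  refine ⟨ψ, fun T v V => ?_⟩
  rw [hψ]
  have hsat : ∀ W : ℕ → Set Node,
      Sat T v W (.and (allFO 0 cover) (allFO 0 (allFO 1 constr))) ↔
        (∀ s ∈ T.dom, ∃ p, s ∈ W (e p)) ∧ ∀ s ∈ T.dom, ∀ t ∈ T.dom, ∀ k p p', K k T s t →
          s ∈ W (e p) → t ∈ W (e p') → ok k (T.label s) p p' := by
    intro W
    simp only [Sat, sat_allFO, hcover, hlocal, sat_imp, htest, Prod.forall]
    refine and_congr (by simp) ?_
    refine forall₂_congr fun s hs => forall₂_congr fun t ht => forall_congr' fun k => ?_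
    rw [hκ k _ _ _ (by simpa using hs) (by simpa using ht)]
    simp [hs]
    grind
  constructor
  · rintro ⟨W, -, -, h⟩
    obtain ⟨h₁, h₂⟩ := (hsat W).1 h
    have : Nonempty P := (h₁ [] T.nil_mem).nonempty
    choose! σ hσ using h₁
    exact ⟨σ, fun k s hs t ht hk => h₂ s hs t ht k _ _ hk (hσ s hs) (hσ t ht)⟩
  · rintro ⟨σ, hσ⟩
    classical
    refine ⟨fun i => if h : i < n then {s | s ∈ T.dom ∧ σ s = e.symm ⟨i, h⟩} else V i,
      fun i hi => ?_, fun i hi => ?_, (hsat _).2 ⟨fun s hs => ⟨σ s, ?_⟩, ?_⟩⟩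
    · simp only [hi, dite_true]; exact fun s hs => hs.1
    · simp only [hi.not_gt, dite_false]
    · simp [hs]
    · intro s hs t ht k p p' hk hp hp'
      simp only [Fin.is_lt, dite_true, Fin.eta, Equiv.symm_apply_apply] at hp hp'
      rw [← hp.2, ← hp'.2]
      exact hσ k s hs t ht hk

/-! ### Definable relations on nodes -/

theorem defines_root : ∃ φ : MSO A, φ.Defines₂ fun _ s _ => s = [] := by
  refine ⟨allFO 2 (.desc 0 2), fun T v V h0 h1 => ?_⟩
  simp only [sat_allFO, Sat, UTree.descR]
  constructor
  · intro h
    simpa using (h [] T.nil_mem).2.2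
  · intro h s hs
    simpa [h, T.nil_mem] using hs

theorem defines_leaf : ∃ φ : MSO A, φ.Defines₂ fun T s _ => s ++ [0] ∉ T.dom := by
  refine ⟨allFO 2 (imp (.desc 0 2) (.eq 2 0)), fun T v V h0 h1 => ?_⟩
  simp only [sat_allFO, sat_imp, Sat, UTree.descR]
  constructor
  · intro h hm
    simpa using h _ hm (by simp [h0, hm])
  · intro h s hs hd
    obtain ⟨r, hr⟩ := hd.2.2
    simp only [Function.update_self, ne_eq, OfNat.zero_ne_ofNat, not_false_eq_true,
      Function.update_of_ne] at hr ⊢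
    subst hr
    rcases r with _ | ⟨i, r⟩
    · simp
    · refine absurd (UTree.child_mem_of_le (T.prefix_closed hs ?_) (Nat.zero_le i)) h
      exact ⟨r, by simp⟩

theorem defines_firstChild : ∃ φ : MSO A, φ.Defines₂ fun _ s t => t = s ++ [0] := by
  refine ⟨.and (.and (.desc 0 1) (.not (.eq 0 1))) (allFO 2 (.and
    (imp (.and (.desc 0 2) (.desc 2 1)) (or (.eq 2 0) (.eq 2 1)))
    (imp (.sib 2 1) (.eq 2 1)))), fun T v V h0 h1 => ?_⟩
  simp only [sat_allFO, sat_imp, sat_or, Sat, UTree.descR, UTree.sibR, Function.update_self, ne_eq,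
    OfNat.zero_ne_ofNat, OfNat.one_ne_ofNat, not_false_eq_true, Function.update_of_ne]
  generalize v 0 = s at *
  generalize v 1 = t at *
  constructor
  · rintro ⟨⟨⟨-, -, r, rfl⟩, hne⟩, h⟩
    rcases r with _ | ⟨i, r⟩
    · simp at hne
    have hi : s ++ [i] ∈ T.dom := T.prefix_closed h1 ⟨r, by simp⟩
    obtain rfl : r = [] := by
      have := (h _ hi).1 ⟨⟨h0, hi, by simp⟩, hi, h1, r, by simp⟩
      simpa using this
    have hz := UTree.child_mem_of_le hi (Nat.zero_le i)
    have := (h _ hz).2 ⟨hz, h1, s, 0, i, rfl, rfl, Nat.zero_le i⟩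
    rw [this]
  · rintro rfl
    refine ⟨⟨⟨h0, h1, by simp⟩, by simp⟩, fun r hr => ⟨?_, ?_⟩⟩
    · rintro ⟨⟨-, -, r, rfl⟩, -, -, hp⟩
      rw [List.prefix_append_right_inj] at hp
      rcases List.prefix_cons_iff.1 hp with rfl | ⟨r', rfl, hr'⟩
      · simp
      · simp [List.prefix_nil.1 hr']
    · rintro ⟨-, -, u, i, j, rfl, h, hij⟩
      obtain ⟨rfl, h⟩ := List.append_inj' h rfl
      simp at h
      subst h
      simp at hij
      simp [hij]

theorem defines_nextSibling :
    ∃ φ : MSO A, φ.Defines₂ fun _ s t => ∃ u i, s = u ++ [i] ∧ t = u ++ [i + 1] := by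
  refine ⟨.and (.and (.sib 0 1) (.not (.eq 0 1))) (allFO 2
    (imp (.and (.sib 0 2) (.sib 2 1)) (or (.eq 2 0) (.eq 2 1)))), fun T v V h0 h1 => ?_⟩
  simp only [sat_allFO, sat_imp, sat_or, Sat, UTree.sibR, Function.update_self, ne_eq,
    OfNat.zero_ne_ofNat, OfNat.one_ne_ofNat, not_false_eq_true, Function.update_of_ne]
  generalize v 0 = s at *
  generalize v 1 = t at *
  constructor
  · rintro ⟨⟨⟨-, -, u, i, j, rfl, rfl, hij⟩, hne⟩, h⟩
    have hij' : i < j := lt_of_le_of_ne hij fun h => hne (by rw [h])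
    have hm := UTree.child_mem_of_le h1 hij'
    have := h _ hm ⟨⟨h0, hm, u, i, i + 1, rfl, rfl, by omega⟩, hm, h1, u, i + 1, j, rfl, rfl, hij'⟩
    simp at this
    exact ⟨u, i, rfl, by simp [this]⟩
  · rintro ⟨u, i, rfl, rfl⟩
    refine ⟨⟨⟨h0, h1, u, i, i + 1, rfl, rfl, by omega⟩, by simp⟩, fun r hr => ?_⟩
    rintro ⟨⟨-, -, u', i', j, h, rfl, hij⟩, -, -, u'', j', k, h', h'', hjk⟩
    obtain ⟨rfl, h⟩ := List.append_inj' h rfl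
    obtain ⟨rfl, h'⟩ := List.append_inj' h' rfl
    obtain ⟨-, h''⟩ := List.append_inj' h'' rfl
    simp at h h' h'' ⊢
    omega

theorem defines_last :
    ∃ φ : MSO A, φ.Defines₂ fun T s _ => ∃ u i, s = u ++ [i] ∧ u ++ [i + 1] ∉ T.dom := by
  refine ⟨.and (.sib 0 0) (allFO 2 (imp (.sib 0 2) (.eq 2 0))), fun T v V h0 h1 => ?_⟩
  simp only [sat_allFO, sat_imp, Sat, UTree.sibR, Function.update_self, ne_eq,
    OfNat.zero_ne_ofNat, not_false_eq_true, Function.update_of_ne]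
  generalize v 0 = s at *
  constructor
  · rintro ⟨⟨-, -, u, i, -, rfl, -, -⟩, h⟩
    refine ⟨u, i, rfl, fun hm => ?_⟩
    simpa using h _ hm ⟨h0, hm, u, i, i + 1, rfl, rfl, by omega⟩
  · rintro ⟨u, i, rfl, hl⟩
    refine ⟨⟨h0, h0, u, i, i, rfl, rfl, le_rfl⟩, fun r hr => ?_⟩
    rintro ⟨-, -, u', i', j, h, rfl, hij⟩
    obtain ⟨rfl, h⟩ := List.append_inj' h rfl
    simp at h
    subst h
    have : ¬ i + 1 ≤ j := fun hj => hl (UTree.child_mem_of_le hr hj)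
    simp
    omega

end MSO

/-! ### From NUTA to MSO -/

/-- The five local constraints: at the root, at leaves, between a node and its first child, between
consecutive siblings, and at last siblings. -/
inductive Site : Type where
  | root | leaf | firstChild | nextSibling | last

instance : Finite Site :=
  Set.finite_univ_iff.1 <| (Set.toFinite {Site.root, .leaf, .firstChild, .nextSibling, .last}).subset
    fun k _ => by cases k <;> simp

/-- The pairs of nodes at which a local constraint applies; constraints on a single node ignore the
second component. -/
def Site.rel {A : Type} : Site → UTree A → Node → Node → Prop
  | .root, _, s, _ => s = []
  | .leaf, T, s, _ => s ++ [0] ∉ T.dom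
  | .firstChild, _, s, t => t = s ++ [0]
  | .nextSibling, _, s, t => ∃ u i, s = u ++ [i] ∧ t = u ++ [i + 1]
  | .last, T, s, _ => ∃ u i, s = u ++ [i] ∧ u ++ [i + 1] ∉ T.dom

namespace NUTA

variable {A : Type} (N : NUTA A)

/-- The left quotients of the horizontal languages of `N`; they act as the states of the
deterministic automata of these languages. -/
def quotients : Set (Language N.Q) :=
  ⋃ x : N.Q × A, Set.range (N.δ x.1 x.2).matches'.leftQuotient

theorem finite_quotients [Finite A] : N.quotients.Finite := by
  have := N.fintype_Q
  exact Set.finite_iUnion fun x => finite_leftQuotients _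

/-- The local constraints on a colouring by pairs `(q, r)`: `q` is the state of the node, and `r`
the language in which the states of the node and its right siblings have to form a word. -/
def ok : Site → A → N.Q × N.quotients → N.Q × N.quotients → Prop
  | .root, _, p, _ => p.1 ∈ N.F
  | .leaf, a, p, _ => [] ∈ (N.δ p.1 a).matches'
  | .firstChild, a, p, p' => p'.2.1 = (N.δ p.1 a).matches'
  | .nextSibling, _, p, p' => p'.2.1 = p.2.1.leftQuotient [p.1]
  | .last, _, p, _ => [p.1] ∈ p.2.1

theorem accepts_iff_colouring (T : UTree A) :
    N.Accepts T ↔ ∃ σ : Node → N.Q × N.quotients,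
      ∀ k : Site, ∀ s ∈ T.dom, ∀ t ∈ T.dom, k.rel T s t → N.ok k (T.label s) (σ s) (σ t) := by
  constructor
  · rintro ⟨ρ, hrun, hF⟩
    -- `lang u i` is what remains of the horizontal language at `u` after its first `i` children
    let lang : Node → ℕ → N.quotients := fun u i =>
      ⟨(N.δ (ρ u) (T.label u)).matches'.leftQuotient ((List.range i).map fun j => ρ (u ++ [j])),
        Set.mem_iUnion.2 ⟨(ρ u, T.label u), _, rfl⟩⟩
    have hrun' : ∀ u ∈ T.dom, ∀ i, T.childCount u = i →
        (List.range i).map (fun j => ρ (u ++ [j])) ∈ (N.δ (ρ u) (T.label u)).matches' := by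
      rintro u hu i rfl
      simpa [UTree.childrenList, Function.comp_def] using hrun u hu
    refine ⟨fun s => (ρ s, lang s.dropLast (s.getLast?.getD 0)), fun k s hs t ht hk => ?_⟩
    cases k with
    | root => obtain rfl : s = [] := hk; exact hF
    | leaf =>
      have hc : T.childCount s = 0 := by
        have : ¬ _ := hk
        rw [UTree.mem_dom_iff_lt_childCount] at this
        omega
      exact hrun' s hs 0 hc
    | firstChild =>
      obtain rfl : t = s ++ [0] := hk
      simp [ok, lang]
    | nextSibling =>
      obtain ⟨u, i, rfl, rfl⟩ := hk
      simp [ok, lang, List.range_succ, Language.leftQuotient_append]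
    | last =>
      obtain ⟨u, i, rfl, hl⟩ := hk
      have hu : u ∈ T.dom := T.prefix_closed hs (List.prefix_append _ _)
      have hc : T.childCount u = i + 1 := by
        rw [UTree.mem_dom_iff_lt_childCount] at hl hs
        omega
      simpa [ok, lang, List.range_succ] using hrun' u hu _ hc
  · rintro ⟨σ, hσ⟩
    have hword : ∀ u i, u ++ [i] ∈ T.dom →
        (T.childrenFrom u i).map (fun s => (σ s).1) ∈ (σ (u ++ [i])).2.1 := by
      intro u i
      induction u, i using UTree.forest_induction T with
      | empty u i hm => exact fun h => absurd h hm
      | node u i hm _ ih =>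
        intro _
        rw [UTree.childrenFrom_of_mem hm, List.map_cons]
        by_cases hm' : u ++ [i + 1] ∈ T.dom
        · have h : (σ (u ++ [i + 1])).2.1 = _ := hσ .nextSibling _ hm _ hm' ⟨u, i, rfl, rfl⟩
          have := ih hm'
          rw [h] at this
          simpa using this
        · rw [UTree.childrenFrom_of_notMem hm']
          exact hσ .last _ hm _ hm ⟨u, i, rfl, hm'⟩
    refine ⟨fun s => (σ s).1, fun s hs => ?_, hσ .root _ T.nil_mem _ T.nil_mem rfl⟩
    rw [UTree.childrenList_eq]
    by_cases hm : s ++ [0] ∈ T.dom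
    · have h : (σ (s ++ [0])).2.1 = _ := hσ .firstChild _ hs _ hm rfl
      rw [← h]
      exact hword s 0 hm
    · rw [UTree.childrenFrom_of_notMem hm]
      exact hσ .leaf _ hs _ hs hm

theorem exists_mso [Finite A] : ∃ φ : MSO A, ∀ T v V, N.Accepts T ↔ φ.Sat T v V := by
  have := N.fintype_Q
  have : Finite N.quotients := N.finite_quotients
  obtain ⟨φ, hφ⟩ := MSO.exists_colouring (A := A) (fun k : Site => k.rel) (fun k => by
    cases k
    exacts [MSO.defines_root, MSO.defines_leaf, MSO.defines_firstChild, MSO.defines_nextSibling,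
      MSO.defines_last]) N.ok
  exact ⟨φ, fun T v V => by rw [hφ, accepts_iff_colouring]⟩

end NUTA

/-- A set of ordered unranked Σ-trees is regular (the language
of some nondeterministic unranked tree automaton) iff it is definable by an
MSO sentence. -/
theorem regular_iff_mso_definable (A : Type) [Fintype A] (L : Set (UTree A)) :
    RegularLang L ↔ ∃ φ : MSO A, φ.DefinesB L := by
  constructor
  · rintro ⟨N, hN⟩
    obtain ⟨φ, hφ⟩ := N.exists_mso
    exact ⟨φ, fun T v V => by rw [← hN, hφ]⟩
  · rintro ⟨φ, hφ⟩
    obtain ⟨R, hR, h⟩ := MSO.exists_recog φ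
    obtain ⟨N, hN⟩ := regular_of_recog hR
    refine ⟨N, fun T => (hN T).trans ?_⟩
    rw [hφ T (fun _ => []) (fun _ => ∅), h T _ _ fun _ => T.nil_mem]
    rfl

end UnrankedTrees
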